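/- For all 0 ≤ s < t < T and every bounded Borel measurable function f : ℝ^ν → ℝ, one has ℙ-almost surely E[f(b_t) | 𝔉_s] = ∫_{ℝ^ν} (p_{t−s}(b_s, a) p_{T−t}(a, y) / p_{T−s}(b_s, y)) f(a) da; i.e., the Brownian bridge is a Markov process with explicit transition kernel ρ_{s,t}(z,a) := p_{t−s}(z,a) p_{T−t}(a,y)/p_{T−s}(z,y). -/

import Mathlib

open MeasureTheory ProbabilityTheory

/-- A `ν`-dimensional Brownian motion `B` on a filtered probability space
`(Ω, m, (ℱ_t), P)` satisfying the usual conditions: the filtration is complete and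
right-continuous, `B` has continuous paths on `[0,∞)` with `B_0 = 0`, `B` is adapted, and
for `0 ≤ s ≤ t` the increment `B_t − B_s` is independent of `ℱ_s` and is a centered
Gaussian vector with covariance matrix `(t−s)·Id` (componentwise iid `N(0, t−s)`). -/
structure IsBrownianMotion {Ω : Type*} [m : MeasurableSpace Ω] (P : Measure Ω) (ν : ℕ)
    (F : Filtration ℝ m) (B : ℝ → Ω → Fin ν → ℝ) : Prop where
  complete : ∀ (t : ℝ) (A : Set Ω), P A = 0 → MeasurableSet[F t] A
  rightCont : ∀ t : ℝ, (F t : MeasurableSpace Ω) = ⨅ s ∈ Set.Ioi t, (F s : MeasurableSpace Ω)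
  contPaths : ∀ ω : Ω, ContinuousOn (fun t => B t ω) (Set.Ici 0)
  start : ∀ ω : Ω, B 0 ω = 0
  adapted : ∀ t : ℝ, Measurable[F t] (B t)
  indepIncr : ∀ s t : ℝ, 0 ≤ s → s ≤ t →
    Indep (MeasurableSpace.comap (fun ω => B t ω - B s ω) inferInstance) (F s) P
  gaussIncr : ∀ s t : ℝ, 0 ≤ s → s ≤ t →
    Measure.map (fun ω => B t ω - B s ω) P =
      Measure.pi fun _ : Fin ν => gaussianReal 0 (Real.toNNReal (t - s))

/-- The Brownian bridge from `q` to `y` in time `T` driven by the path `B`: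
`b_t = (t/T)y + ((T−t)/T)q + B_t − (T−t)∫₀ᵗ (T−s)⁻² B_s ds` for `t < T`, and `b_t = y`
otherwise (in particular `b_T = y`). -/
noncomputable def bridgeBB (ν : ℕ) (T : ℝ) (q y : Fin ν → ℝ) (B : ℝ → Fin ν → ℝ)
    (t : ℝ) : Fin ν → ℝ :=
  if t < T then
    (t / T) • y + ((T - t) / T) • q + B t -
      (T - t) • ∫ s in (0 : ℝ)..t, ((T - s) ^ 2)⁻¹ • B s
  else y

/-- The `ν`-dimensional Gaussian heat kernel `p_t(u,z) = (2πt)^{−ν/2} e^{−|u−z|²/(2t)}`. -/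
noncomputable def heatKernel (ν : ℕ) (t : ℝ) (u z : Fin ν → ℝ) : ℝ :=
  (2 * Real.pi * t) ^ (-(ν : ℝ) / 2) * Real.exp (-(∑ i, (u i - z i) ^ 2) / (2 * t))

/-- grid points -/
noncomputable def gridPt (a b : ℝ) (n k : ℕ) : ℝ := a + (k : ℝ) * ((b - a) / n)

lemma gridPt_zero (a b : ℝ) (n : ℕ) : gridPt a b n 0 = a := by simp [gridPt]

lemma gridPt_last (a b : ℝ) (n : ℕ) (hn : 0 < n) : gridPt a b n n = b := by
  have : (n : ℝ) ≠ 0 := by positivity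
  unfold gridPt
  field_simp
  ring

lemma gridPt_succ_sub (a b : ℝ) (n k : ℕ) :
    gridPt a b n (k + 1) - gridPt a b n k = (b - a) / n := by
  unfold gridPt
  push_cast
  ring

lemma gridPt_mono (a b : ℝ) (hab : a ≤ b) (n : ℕ) : Monotone (gridPt a b n) := by
  refine monotone_nat_of_le_succ fun k => ?_
  have := gridPt_succ_sub a b n k
  have h2 : 0 ≤ (b - a) / n := div_nonneg (by linarith) (by positivity)
  linarith

lemma gridPt_mem (a b : ℝ) (hab : a ≤ b) (n k : ℕ) (hn : 0 < n) (hk : k ≤ n) :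
    gridPt a b n k ∈ Set.Icc a b := by
  constructor
  · exact (gridPt_zero a b n).symm.le.trans (gridPt_mono a b hab n (Nat.zero_le k))
  · conv_rhs => rw [← gridPt_last a b n hn]
    exact gridPt_mono a b hab n hk

lemma tendsto_riemann {E : Type*} [NormedAddCommGroup E] [NormedSpace ℝ E] [CompleteSpace E]
    (a b : ℝ) (hab : a ≤ b)
    (φ : ℝ → ℝ) (h : ℝ → E) (hφ : ContinuousOn φ (Set.Icc a b))
    (hh : ContinuousOn h (Set.Icc a b)) (j : ℕ) (hj : j ≤ 1) :
    Filter.Tendsto (fun n : ℕ => ∑ k ∈ Finset.range n,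
      (∫ r in gridPt a b n k..gridPt a b n (k + 1), φ r) • h (gridPt a b n (k + j)))
      Filter.atTop (nhds (∫ r in a..b, φ r • h r)) := by
  obtain ⟨M, hM⟩ := isCompact_Icc.exists_bound_of_continuousOn hφ
  have hu := isCompact_Icc.uniformContinuousOn_of_continuous hh
  rw [Metric.uniformContinuousOn_iff_le] at hu
  have hM0 : 0 ≤ M := (norm_nonneg _).trans (hM a ⟨le_rfl, hab⟩)
  rw [Metric.tendsto_atTop]
  intro ε hε
  set η := ε / (2 * (M * (b - a) + 1)) with hη
  have hpos : 0 < M * (b - a) + 1 := by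
    have := mul_nonneg hM0 (sub_nonneg.2 hab)
    linarith
  have hη0 : 0 < η := by positivity
  obtain ⟨δ, hδ, hu⟩ := hu η hη0
  obtain ⟨N, hN⟩ := exists_nat_gt ((b - a) / δ)
  refine ⟨N + 1, fun n hn => ?_⟩
  have hn0 : 0 < n := by omega
  have hnR : (0 : ℝ) < n := by exact_mod_cast hn0
  have hmesh : (b - a) / n ≤ δ := by
    rw [div_le_iff₀ hnR]
    rw [div_lt_iff₀ hδ] at hN
    have : (N : ℝ) ≤ n := by exact_mod_cast (by omega : N ≤ n)
    nlinarith
  have hsub : ∀ k < n, Set.uIcc (gridPt a b n k) (gridPt a b n (k + 1)) ⊆ Set.Icc a b := by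
    intro k hk
    rw [Set.uIcc_of_le (gridPt_mono a b hab n (Nat.le_succ k))]
    exact Set.Icc_subset_Icc (gridPt_mem a b hab n k hn0 hk.le).1
      (gridPt_mem a b hab n (k + 1) hn0 hk).2
  have hIntg : ∀ k < n, IntervalIntegrable (fun r => φ r • h r) volume
      (gridPt a b n k) (gridPt a b n (k + 1)) := fun k hk =>
    ((hφ.smul hh).mono (hsub k hk)).intervalIntegrable
  have e1 := intervalIntegral.sum_integral_adjacent_intervals hIntg
  rw [gridPt_zero, gridPt_last a b n hn0] at e1
  rw [dist_eq_norm, ← e1, ← Finset.sum_sub_distrib]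
  have hb : ∀ k ∈ Finset.range n,
      ‖(∫ r in gridPt a b n k..gridPt a b n (k + 1), φ r) • h (gridPt a b n (k + j)) -
        ∫ r in gridPt a b n k..gridPt a b n (k + 1), φ r • h r‖ ≤ M * η * ((b - a) / n) := by
    intro k hk
    rw [Finset.mem_range] at hk
    have hIntg3 : IntervalIntegrable (fun r => φ r • h (gridPt a b n (k + j))) volume
        (gridPt a b n k) (gridPt a b n (k + 1)) :=
      ((hφ.mono (hsub k hk)).smul continuousOn_const).intervalIntegrable
    rw [← intervalIntegral.integral_smul_const, ← intervalIntegral.integral_sub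
      hIntg3 (hIntg k hk)]
    have hle := gridPt_mono a b hab n (Nat.le_succ k)
    have hgap := gridPt_succ_sub a b n k
    refine (intervalIntegral.norm_integral_le_of_norm_le_const (C := M * η) ?_).trans ?_
    · intro r hr
      rw [← smul_sub, norm_smul]
      have hr' := Set.uIoc_subset_uIcc hr
      have hrm := hsub k hk hr'
      rw [Set.uIcc_of_le hle] at hr'
      have hkj : gridPt a b n (k + j) ∈ Set.Icc (gridPt a b n k) (gridPt a b n (k + 1)) :=
        ⟨gridPt_mono a b hab n (by omega), gridPt_mono a b hab n (by omega)⟩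
      have hkm : gridPt a b n (k + j) ∈ Set.Icc a b := gridPt_mem a b hab n _ hn0 (by omega)
      have hd := hu _ hkm _ hrm (by
        rw [Real.dist_eq, abs_le]
        simp only [Nat.succ_eq_add_one] at hr'
        constructor <;> linarith [hkj.1, hkj.2, hr'.1, hr'.2])
      rw [dist_eq_norm] at hd
      exact mul_le_mul (hM r hrm) hd (norm_nonneg _) hM0
    · rw [hgap, abs_of_nonneg (div_nonneg (by linarith) hnR.le)]
  refine (norm_sum_le_of_le _ hb).trans_lt ?_
  rw [Finset.sum_const, Finset.card_range, nsmul_eq_mul]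
  have : (n : ℝ) * (M * η * ((b - a) / n)) = (M * (b - a)) * η := by
    field_simp
  rw [this, hη, ← mul_div_assoc, div_lt_iff₀ (by positivity)]
  nlinarith [mul_nonneg hM0 (sub_nonneg.2 hab)]

lemma charFunDual_stdpi (ν : ℕ) (v : NNReal) (L : StrongDual ℝ (Fin ν → ℝ)) :
    charFunDual (Measure.pi fun _ : Fin ν => gaussianReal 0 v) L =
      Complex.exp (-((v : ℝ) * (∑ i, (L (Pi.single i 1)) ^ 2) / 2 : ℝ)) := by
  rw [charFunDual_pi]
  have : ∀ i : Fin ν, charFunDual (gaussianReal 0 v)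
      (L ∘SL ContinuousLinearMap.single ℝ (fun _ => ℝ) i) =
      Complex.exp (-((v : ℝ) * (L (Pi.single i 1)) ^ 2 / 2 : ℝ)) := by
    intro i
    have h1 : (L ∘SL ContinuousLinearMap.single ℝ (fun _ => ℝ) i) =
        (L (Pi.single i 1)) • ContinuousLinearMap.id ℝ ℝ := by
      ext
      simp
    rw [h1, ← charFun_map_eq_charFunDual_smul]
    simp only [ContinuousLinearMap.coe_id', Measure.map_id, charFun_gaussianReal]
    congr 1
    push_cast
    ring
  simp_rw [this, ← Complex.exp_sum]
  congr 1
  push_cast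
  rw [Finset.sum_neg_distrib, Finset.mul_sum, Finset.sum_div]

lemma charFun_steps {Ω : Type*} [m : MeasurableSpace Ω] (P : Measure Ω)
    [IsProbabilityMeasure P] (ν : ℕ) (F : Filtration ℝ m)
    (B : ℝ → Ω → Fin ν → ℝ) (hB : IsBrownianMotion P ν F B)
    (τ : ℕ → ℝ) (hτ : Monotone τ) (h0 : 0 ≤ τ 0) (c : ℕ → ℝ)
    (A : Set Ω) (hA : MeasurableSet[F (τ 0)] A) (L : StrongDual ℝ (Fin ν → ℝ)) (k : ℕ) :
    ∫ ω in A, Complex.exp ((L (∑ j ∈ Finset.range k, c j • (B (τ (j + 1)) ω - B (τ j) ω)) : ℝ)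
        * Complex.I) ∂P =
      (P.real A : ℂ) * Complex.exp (-((∑ j ∈ Finset.range k, c j ^ 2 * (τ (j + 1) - τ j)) *
        (∑ i, (L (Pi.single i 1)) ^ 2) / 2 : ℝ)) := by
  have hBm : ∀ r, Measurable (B r) := fun r => (hB.adapted r).mono (F.le r) le_rfl
  have hAm : MeasurableSet A := F.le _ _ hA
  induction k with
  | zero => simp
  | succ k ih =>
    simp only [Finset.sum_range_succ, map_add, Complex.ofReal_add, add_mul, Complex.exp_add]
    set S : Ω → Fin ν → ℝ := fun ω => ∑ j ∈ Finset.range k, c j • (B (τ (j + 1)) ω - B (τ j) ω)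
      with hS
    set D : Ω → Fin ν → ℝ := fun ω => B (τ (k + 1)) ω - B (τ k) ω with hD
    set W : Ω → ℂ := A.indicator (fun ω => Complex.exp ((L (S ω) : ℝ) * Complex.I)) with hW
    have hDm : Measurable D := (hBm _).sub (hBm _)
    have hSm : Measurable[F (τ k)] S := by
      rw [hS]
      refine Finset.measurable_fun_sum _ fun j hj => ?_
      have hj' := Finset.mem_range.1 hj
      have h1 : Measurable[F (τ k)] (B (τ (j + 1))) :=
        (hB.adapted _).mono (F.mono (hτ (by omega))) le_rfl
      have h2 : Measurable[F (τ k)] (B (τ j)) :=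
        (hB.adapted _).mono (F.mono (hτ (by omega))) le_rfl
      exact (h1.sub h2).const_smul (c j)
    have hcont : Continuous (fun z : Fin ν → ℝ => Complex.exp ((L z : ℝ) * Complex.I)) := by
      fun_prop
    have hWm : Measurable[F (τ k)] W := by
      refine Measurable.indicator ?_ (F.mono (hτ (Nat.zero_le k)) _ hA)
      exact hcont.measurable.comp hSm
    have hcont2 : Continuous (fun z : Fin ν → ℝ => Complex.exp ((L (c k • z) : ℝ) * Complex.I)) := by
      fun_prop
    have hind : IndepFun W (fun ω => Complex.exp ((L (c k • D ω) : ℝ) * Complex.I)) P := by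
      have := hB.indepIncr (τ k) (τ (k + 1)) (h0.trans (hτ (Nat.zero_le k))) (hτ (Nat.le_succ k))
      rw [IndepFun_iff_Indep]
      refine indep_of_indep_of_le_left (indep_of_indep_of_le_right this.symm ?_) ?_
      · have : (fun ω => Complex.exp ((L (c k • D ω) : ℝ) * Complex.I)) =
          (fun z : Fin ν → ℝ => Complex.exp ((L (c k • z) : ℝ) * Complex.I)) ∘ D := rfl
        rw [this, ← MeasurableSpace.comap_comp]
        exact MeasurableSpace.comap_mono hcont2.measurable.comap_le
      · exact hWm.comap_le
    have hlaw : ∫ ω, Complex.exp ((L (c k • D ω) : ℝ) * Complex.I) ∂P =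
        Complex.exp (-((c k ^ 2 * (τ (k + 1) - τ k)) *
        (∑ i, (L (Pi.single i 1)) ^ 2) / 2 : ℝ)) := by
      have h1 := charFunDual_stdpi ν (Real.toNNReal (τ (k + 1) - τ k)) (c k • L)
      rw [← hB.gaussIncr (τ k) (τ (k + 1)) (h0.trans (hτ (Nat.zero_le k))) (hτ (Nat.le_succ k)),
        charFunDual_apply, integral_map hDm.aemeasurable (by fun_prop)] at h1
      simp only [map_smul]
      refine h1.trans ?_
      congr 3
      rw [Real.coe_toNNReal _ (sub_nonneg.2 (hτ (Nat.le_succ k)))]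
      simp only [_root_.smul_apply, smul_eq_mul, mul_pow, ← Finset.mul_sum]
      ring
    have e1 : ∫ ω in A, Complex.exp ((L (S ω) : ℝ) * Complex.I) *
        Complex.exp ((L (c k • D ω) : ℝ) * Complex.I) ∂P =
        ∫ ω, W ω * Complex.exp ((L (c k • D ω) : ℝ) * Complex.I) ∂P := by
      rw [← integral_indicator hAm]
      congr 1
      ext ω
      by_cases hω : ω ∈ A <;> simp [hW, hω]
    rw [e1, hind.integral_fun_mul_eq_mul_integral
      (hWm.mono (F.le _) le_rfl).aestronglyMeasurable
      (hcont2.measurable.comp hDm).aestronglyMeasurable, hlaw, hW, integral_indicator hAm, ih,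
      mul_assoc, ← Complex.exp_add]
    congr 2
    push_cast
    ring

lemma abel_path {E : Type*} [AddCommGroup E] [Module ℝ E] (g : ℕ → ℝ) (b : ℕ → E) (n : ℕ) :
    ∑ k ∈ Finset.range n, g k • (b (k + 1) - b k) =
      g n • b n - g 0 • b 0 - ∑ k ∈ Finset.range n, (g (k + 1) - g k) • b (k + 1) := by
  induction n with
  | zero => simp
  | succ n ih =>
    rw [Finset.sum_range_succ, Finset.sum_range_succ, ih]
    module

lemma integral_invsq (T c u v : ℝ) (huv : u ≤ v) (hv : v < T) :
    ∫ r in u..v, c * ((T - r) ^ 2)⁻¹ = c / (T - v) - c / (T - u) := by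
  have hne : ∀ r ∈ Set.uIcc u v, T - r ≠ 0 := by
    intro r hr
    rw [Set.uIcc_of_le huv] at hr
    linarith [hr.2]
  rw [intervalIntegral.integral_eq_sub_of_hasDerivAt (f := fun r => c / (T - r))]
  · intro r hr
    have h1 : HasDerivAt (fun r => T - r) (-1) r := by
      simpa using (hasDerivAt_id r).const_sub T
    have := (h1.inv (hne r hr)).const_mul c
    simp only [div_eq_mul_inv]
    rw [neg_neg, one_div] at this
    exact this
  · refine ContinuousOn.intervalIntegrable ?_
    refine continuousOn_const.mul (ContinuousOn.inv₀ (by fun_prop) ?_)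
    intro r hr
    exact pow_ne_zero 2 (hne r hr)

lemma path_tendsto (ν : ℕ) (T s t : ℝ) (hT : 0 < T) (hs : 0 ≤ s) (hst : s < t) (htT : t < T)
    (x y : Fin ν → ℝ) (β : ℝ → Fin ν → ℝ) (hβ : ContinuousOn β (Set.Ici 0)) :
    Filter.Tendsto (fun n : ℕ => ∑ k ∈ Finset.range n,
      ((T - t) / (T - gridPt s t n k)) • (β (gridPt s t n (k + 1)) - β (gridPt s t n k)))
      Filter.atTop (nhds (bridgeBB ν T x y β t - ((T - t) / (T - s)) • bridgeBB ν T x y β s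
        - ((t - s) / (T - s)) • y)) := by
  have hR := tendsto_riemann s t hst.le (fun r => (T - t) * ((T - r) ^ 2)⁻¹) β (by
    refine continuousOn_const.mul (ContinuousOn.inv₀ (by fun_prop) ?_)
    intro r hr
    exact pow_ne_zero 2 (by linarith [hr.2])) (hβ.mono fun r hr => hs.trans hr.1) 1 le_rfl
  have hlim := hR.const_sub (β t - ((T - t) / (T - s)) • β s)
  have hTs : T - s ≠ 0 := by linarith
  have hTt : T - t ≠ 0 := by linarith
  have hval : β t - ((T - t) / (T - s)) • β s - (∫ r in s..t, ((T - t) * ((T - r) ^ 2)⁻¹) • β r)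
      = bridgeBB ν T x y β t - ((T - t) / (T - s)) • bridgeBB ν T x y β s
        - ((t - s) / (T - s)) • y := by
    have hii : ∀ u v, 0 ≤ u → u ≤ v → v < T →
        IntervalIntegrable (fun r => ((T - r) ^ 2)⁻¹ • β r) volume u v := by
      intro u v hu huv hv
      refine ContinuousOn.intervalIntegrable ?_
      rw [Set.uIcc_of_le huv]
      have hc : ContinuousOn (fun r : ℝ => ((T - r) ^ 2)⁻¹) (Set.Icc u v) := by
        refine ContinuousOn.inv₀ (by fun_prop) ?_
        intro r hr
        exact pow_ne_zero 2 (by linarith [hr.2])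
      have hc2 : ContinuousOn β (Set.Icc u v) := hβ.mono fun r hr => hu.trans hr.1
      exact hc.smul hc2
    have hadd := intervalIntegral.integral_add_adjacent_intervals
      (hii 0 s le_rfl hs (hst.trans htT)) (hii s t hs hst.le htT)
    simp only [mul_smul, intervalIntegral.integral_smul]
    unfold bridgeBB
    rw [if_pos htT, if_pos (hst.trans htT), ← hadd]
    generalize (∫ r in (0:ℝ)..s, ((T - r) ^ 2)⁻¹ • β r) = I1
    generalize (∫ r in s..t, ((T - r) ^ 2)⁻¹ • β r) = I2
    ext i
    simp only [Pi.sub_apply, Pi.add_apply, Pi.smul_apply, smul_eq_mul]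
    field_simp
    ring
  rw [hval] at hlim
  refine hlim.congr' ?_
  filter_upwards [Filter.eventually_gt_atTop 0] with n hn
  rw [abel_path (fun k => (T - t) / (T - gridPt s t n k)) (fun k => β (gridPt s t n k))]
  rw [gridPt_last s t n hn, gridPt_zero, div_self hTt, one_smul]
  congr 1
  refine Finset.sum_congr rfl fun k hk => ?_
  rw [Finset.mem_range] at hk
  rw [integral_invsq T _ _ _ (gridPt_mono s t hst.le n (Nat.le_succ k))
    ((gridPt_mem s t hst.le n (k + 1) hn hk).2.trans_lt htT)]

lemma var_tendsto (T s t : ℝ) (hst : s < t) (htT : t < T) :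
    Filter.Tendsto (fun n : ℕ => ∑ k ∈ Finset.range n,
      ((T - t) / (T - gridPt s t n k)) ^ 2 * (gridPt s t n (k + 1) - gridPt s t n k))
      Filter.atTop (nhds ((T - t) * (t - s) / (T - s))) := by
  have hR := tendsto_riemann s t hst.le (fun _ => (1 : ℝ))
    (fun r => (T - t) ^ 2 * ((T - r) ^ 2)⁻¹) continuousOn_const (by
    refine continuousOn_const.mul (ContinuousOn.inv₀ (by fun_prop) ?_)
    intro r hr
    exact pow_ne_zero 2 (by linarith [hr.2])) 0 zero_le_one
  have hTs : T - s ≠ 0 := by linarith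
  have hTt : T - t ≠ 0 := by linarith
  simp only [one_smul] at hR
  rw [integral_invsq T _ _ _ hst.le htT] at hR
  have : (T - t) ^ 2 / (T - t) - (T - t) ^ 2 / (T - s) = (T - t) * (t - s) / (T - s) := by
    field_simp
    ring
  rw [this] at hR
  refine hR.congr fun n => Finset.sum_congr rfl fun k _ => ?_
  simp only [intervalIntegral.integral_const, smul_eq_mul, mul_one, add_zero]
  rw [div_pow, div_eq_mul_inv]
  ring

lemma bridge_measurable {Ω : Type*} [m : MeasurableSpace Ω] (P : Measure Ω)
    (ν : ℕ) (F : Filtration ℝ m)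
    (B : ℝ → Ω → Fin ν → ℝ) (hB : IsBrownianMotion P ν F B) (T : ℝ)
    (x y : Fin ν → ℝ) (s : ℝ) (hs : 0 ≤ s) (hsT : s < T) :
    Measurable[F s] (fun ω => bridgeBB ν T x y (fun u => B u ω) s) := by
  unfold bridgeBB
  simp only [if_pos hsT]
  have hI : Measurable[F s] (fun ω => ∫ r in (0 : ℝ)..s, ((T - r) ^ 2)⁻¹ • B r ω) := by
    have hlim : ∀ ω, _ := fun ω => tendsto_riemann 0 s hs (fun r => ((T - r) ^ 2)⁻¹)
      (fun r => B r ω) (by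
        refine (ContinuousOn.inv₀ (by fun_prop) ?_)
        intro r hr
        exact pow_ne_zero 2 (by linarith [hr.2])) ((hB.contPaths ω).mono fun r hr => hr.1) 1 le_rfl
    refine @measurable_of_tendsto_metrizable _ _ (F s) _ _ _ _ _ _ ?_ (tendsto_pi_nhds.2 hlim)
    intro n
    refine Finset.measurable_fun_sum _ fun k hk => ?_
    have hk := Finset.mem_range.1 hk
    have h1 : Measurable[F s] (B (gridPt 0 s n (k + 1))) :=
      (hB.adapted _).mono (F.mono (gridPt_mem 0 s hs n (k + 1) (by omega) hk).2) le_rfl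
    exact h1.const_smul
      (∫ r in gridPt 0 s n k..gridPt 0 s n (k + 1), ((T - r) ^ 2)⁻¹)
  exact (((hB.adapted s).const_add _)).sub (hI.const_smul (T - s))

lemma law_Z {Ω : Type*} [m : MeasurableSpace Ω] (P : Measure Ω)
    [IsProbabilityMeasure P] (ν : ℕ) (F : Filtration ℝ m)
    (B : ℝ → Ω → Fin ν → ℝ) (hB : IsBrownianMotion P ν F B) (T : ℝ) (hT : 0 < T)
    (x y : Fin ν → ℝ) (s t : ℝ) (hs : 0 ≤ s) (hst : s < t) (htT : t < T)
    (Z : Ω → Fin ν → ℝ) (hZ : Z = fun ω => bridgeBB ν T x y (fun u => B u ω) t -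
      ((T - t) / (T - s)) • bridgeBB ν T x y (fun u => B u ω) s - ((t - s) / (T - s)) • y)
    (hZm : Measurable Z)
    (A : Set Ω) (hA : MeasurableSet[F s] A) :
    (P.restrict A).map Z = P A • Measure.pi fun _ : Fin ν =>
      gaussianReal 0 (Real.toNNReal ((T - t) * (t - s) / (T - s))) := by
  have hBm : ∀ r, Measurable (B r) := fun r => (hB.adapted r).mono (F.le r) le_rfl
  have : IsFiniteMeasure (P A • Measure.pi fun _ : Fin ν =>
      gaussianReal 0 (Real.toNNReal ((T - t) * (t - s) / (T - s)))) :=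
    Measure.smul_finite _ (measure_ne_top _ _)
  refine Measure.ext_of_charFunDual ?_
  ext L
  rw [charFunDual_apply, charFunDual_apply, integral_map hZm.aemeasurable (by fun_prop),
    integral_smul_measure, ← charFunDual_apply, charFunDual_stdpi, Real.coe_toNNReal _ (by
      have := sub_pos.2 hst
      have := sub_pos.2 htT
      have := sub_pos.2 (hst.trans htT)
      positivity)]
  set S : ℕ → Ω → Fin ν → ℝ := fun n ω => ∑ k ∈ Finset.range n,
      ((T - t) / (T - gridPt s t n k)) • (B (gridPt s t n (k + 1)) ω - B (gridPt s t n k) ω)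
      with hS
  have hSm : ∀ n, Measurable (S n) := fun n =>
    Finset.measurable_fun_sum _ fun k _ => ((hBm (gridPt s t n (k + 1))).sub
      (hBm (gridPt s t n k))).const_smul ((T - t) / (T - gridPt s t n k))
  have hcont : Continuous (fun z : Fin ν → ℝ => Complex.exp ((L z : ℝ) * Complex.I)) := by
    fun_prop
  have l1 : Filter.Tendsto (fun n => ∫ ω in A, Complex.exp ((L (S n ω) : ℝ) * Complex.I) ∂P)
      Filter.atTop (nhds (∫ ω in A, Complex.exp ((L (Z ω) : ℝ) * Complex.I) ∂P)) := by
    refine tendsto_integral_of_dominated_convergence (fun _ => 1) ?_ (integrable_const _) ?_ ?_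
    · exact fun n => (hcont.measurable.comp (hSm n)).aestronglyMeasurable
    · exact fun n => ae_of_all _ fun ω => (Complex.norm_exp_ofReal_mul_I _).le
    · refine ae_of_all _ fun ω => ?_
      rw [hZ]
      exact (hcont.tendsto _).comp (path_tendsto ν T s t hT hs hst htT x y (fun u => B u ω)
        (hB.contPaths ω))
  have l2 : Filter.Tendsto (fun n : ℕ => (P.real A : ℂ) *
      Complex.exp (-((∑ k ∈ Finset.range n, ((T - t) / (T - gridPt s t n k)) ^ 2 *
        (gridPt s t n (k + 1) - gridPt s t n k)) *
        (∑ i, (L (Pi.single i 1)) ^ 2) / 2 : ℝ))) Filter.atTop (nhds ((P.real A : ℂ) *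
      Complex.exp (-(((T - t) * (t - s) / (T - s)) *
        (∑ i, (L (Pi.single i 1)) ^ 2) / 2 : ℝ)))) := by
    have hc : Continuous (fun v : ℝ => (P.real A : ℂ) *
      Complex.exp (-(v * (∑ i, (L (Pi.single i 1)) ^ 2) / 2 : ℝ))) := by fun_prop
    exact (hc.tendsto _).comp (var_tendsto T s t hst htT)
  have heq := tendsto_nhds_unique (l1.congr fun n => charFun_steps P ν F B hB (gridPt s t n)
    (gridPt_mono s t hst.le n) (by rw [gridPt_zero]; exact hs)
    (fun k => (T - t) / (T - gridPt s t n k)) A (by rw [gridPt_zero]; exact hA) L n) l2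
  rw [heq, Complex.real_smul]
  rfl

lemma pi_gaussian_density (ν : ℕ) (μ : Fin ν → ℝ) (v : NNReal) (hv : v ≠ 0) :
    (Measure.pi fun i : Fin ν => gaussianReal (μ i) v) =
      (volume : Measure (Fin ν → ℝ)).withDensity
        (fun a => ENNReal.ofReal (∏ i, gaussianPDFReal (μ i) v (a i))) := by
  refine Measure.pi_eq fun S hS => ?_
  rw [withDensity_apply _ (MeasurableSet.univ_pi hS)]
  have hi : ∀ i, Integrable (gaussianPDFReal (μ i) v) (volume.restrict (S i)) := fun i =>
    (integrable_gaussianPDFReal _ _).restrict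
  rw [volume_pi, Measure.restrict_pi_pi, ← ofReal_integral_eq_lintegral_ofReal
    (Integrable.fintype_prod_dep hi)
    (ae_of_all _ fun a => Finset.prod_nonneg fun i _ => gaussianPDFReal_nonneg _ _ _),
    integral_fintype_prod_eq_prod (𝕜 := ℝ) (fun i => gaussianPDFReal (μ i) v),
    ENNReal.ofReal_prod_of_nonneg fun i _ => integral_nonneg fun a => gaussianPDFReal_nonneg _ _ _]
  refine Finset.prod_congr rfl fun i _ => ?_
  rw [gaussianReal_apply_eq_integral _ hv]

lemma heatKernel_eq (ν : ℕ) (t : ℝ) (ht : 0 < t) (u z : Fin ν → ℝ) :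
    heatKernel ν t u z = ∏ i, gaussianPDFReal (u i) (Real.toNNReal t) (z i) := by
  unfold heatKernel gaussianPDFReal
  rw [Finset.prod_mul_distrib, ← Real.exp_sum, Finset.prod_const, Finset.card_univ,
    Fintype.card_fin, Real.coe_toNNReal _ ht.le]
  congr 1
  · rw [Real.sqrt_eq_rpow, ← Real.rpow_neg (by positivity), ← Real.rpow_natCast,
      ← Real.rpow_mul (by positivity)]
    congr 1
    ring
  · rw [← Finset.sum_div, Finset.sum_neg_distrib]
    congr 4
    ext i
    ring

lemma pdf_ratio (p q z a y : ℝ) (hp : 0 < p) (hq : 0 < q) :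
    gaussianPDFReal z (Real.toNNReal p) a * gaussianPDFReal a (Real.toNNReal q) y /
      gaussianPDFReal z (Real.toNNReal (p + q)) y =
    gaussianPDFReal (q / (p + q) * z + p / (p + q) * y) (Real.toNNReal (q * p / (p + q))) a := by
  have hpq : 0 < p + q := by positivity
  have hv : 0 < q * p / (p + q) := by positivity
  rw [div_eq_iff (gaussianPDFReal_pos _ _ _ (by simpa using hpq)).ne']
  unfold gaussianPDFReal
  rw [Real.coe_toNNReal _ hp.le, Real.coe_toNNReal _ hq.le, Real.coe_toNNReal _ hpq.le,
    Real.coe_toNNReal _ hv.le, mul_mul_mul_comm, mul_mul_mul_comm (√(2 * Real.pi * (q * p / (p + q))))⁻¹, ← Real.exp_add, ← Real.exp_add,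
    ← mul_inv, ← mul_inv, ← Real.sqrt_mul (by positivity), ← Real.sqrt_mul (by positivity)]
  congr 1
  · congr 2
    field_simp
  · congr 1
    field_simp
    ring

lemma integral_shift (ν : ℕ) (T s t : ℝ) (hst : s < t) (htT : t < T) (z y : Fin ν → ℝ)
    (f : (Fin ν → ℝ) → ℝ) (hfm : Measurable f) :
    ∫ w, f (((T - t) / (T - s)) • z + ((t - s) / (T - s)) • y + w)
      ∂(Measure.pi fun _ : Fin ν =>
        gaussianReal 0 (Real.toNNReal ((T - t) * (t - s) / (T - s)))) =
    ∫ a, heatKernel ν (t - s) z a * heatKernel ν (T - t) a y / heatKernel ν (T - s) z y * f a := by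
  have h1 := sub_pos.2 hst
  have h2 := sub_pos.2 htT
  have h3 := sub_pos.2 (hst.trans htT)
  set c := ((T - t) / (T - s)) • z + ((t - s) / (T - s)) • y with hc
  set v := Real.toNNReal ((T - t) * (t - s) / (T - s)) with hv
  have hv0 : v ≠ 0 := by
    rw [hv, Ne, Real.toNNReal_eq_zero, not_le]; positivity
  have hmap : (Measure.pi fun _ : Fin ν => gaussianReal 0 v).map (fun w => c + w) =
      Measure.pi fun i => gaussianReal (c i) v := by
    have := Measure.pi_map_pi (μ := fun _ : Fin ν => gaussianReal 0 v)
      (f := fun i (w : ℝ) => c i + w) (fun i => by fun_prop)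
    simp only [gaussianReal_map_const_add, zero_add] at this
    exact this
  rw [← integral_map (φ := fun w => c + w) (by fun_prop) hfm.aestronglyMeasurable, hmap,
    pi_gaussian_density _ _ _ hv0, integral_withDensity_eq_integral_toReal_smul
      (by
        refine ENNReal.measurable_ofReal.comp (Finset.measurable_fun_prod _ fun i _ => ?_)
        exact (measurable_gaussianPDFReal _ _).comp (measurable_pi_apply i))
      (ae_of_all _ fun _ => ENNReal.ofReal_lt_top)]
  congr 1
  ext a
  rw [ENNReal.toReal_ofReal (Finset.prod_nonneg fun i _ => gaussianPDFReal_nonneg _ _ _),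
    smul_eq_mul, heatKernel_eq _ _ h1, heatKernel_eq _ _ h2, heatKernel_eq _ _ h3,
    ← Finset.prod_mul_distrib, ← Finset.prod_div_distrib]
  congr 1
  refine Finset.prod_congr rfl fun i _ => ?_
  have := pdf_ratio (t - s) (T - t) (z i) (a i) (y i) h1 h2
  rw [show t - s + (T - t) = T - s by ring] at this
  rw [this]
  rfl

/-- Markov property of the Brownian bridge with explicit transition
kernel: for `0 ≤ s < t < T` and bounded Borel `f`, `P`-a.s.
`E[f(b_t) | ℱ_s] = ∫ p_{t−s}(b_s,a) p_{T−t}(a,y) f(a) da / p_{T−s}(b_s,y)`. -/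
theorem statement12 {Ω : Type*} [m : MeasurableSpace Ω] (P : Measure Ω)
    [IsProbabilityMeasure P] (ν : ℕ) (hν : 0 < ν) (F : Filtration ℝ m)
    (B : ℝ → Ω → Fin ν → ℝ) (hB : IsBrownianMotion P ν F B) (T : ℝ) (hT : 0 < T)
    (x y : Fin ν → ℝ) (s t : ℝ) (hs : 0 ≤ s) (hst : s < t) (htT : t < T)
    (f : (Fin ν → ℝ) → ℝ) (hfm : Measurable f) (hfb : ∃ C, ∀ z, |f z| ≤ C) :
    P[fun ω => f (bridgeBB ν T x y (fun u => B u ω) t)|F s] =ᵐ[P]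
      fun ω => ∫ a : Fin ν → ℝ,
        heatKernel ν (t - s) (bridgeBB ν T x y (fun u => B u ω) s) a *
          heatKernel ν (T - t) a y /
            heatKernel ν (T - s) (bridgeBB ν T x y (fun u => B u ω) s) y * f a := by
  obtain ⟨C, hC⟩ := hfb
  have hsT := hst.trans htT
  set X : Ω → Fin ν → ℝ := fun ω => bridgeBB ν T x y (fun u => B u ω) s with hX
  set Y : Ω → Fin ν → ℝ := fun ω => bridgeBB ν T x y (fun u => B u ω) t with hY
  have hXm : Measurable[F s] X := bridge_measurable P ν F B hB T x y s hs hsT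
  have hXm' : Measurable X := hXm.mono (F.le s) le_rfl
  have hYm : Measurable Y :=
    (bridge_measurable P ν F B hB T x y t (hs.trans hst.le) htT).mono (F.le t) le_rfl
  set γ : Measure (Fin ν → ℝ) := Measure.pi fun _ : Fin ν =>
      gaussianReal 0 (Real.toNNReal ((T - t) * (t - s) / (T - s))) with hγ
  set Z : Ω → Fin ν → ℝ := fun ω => Y ω - ((T - t) / (T - s)) • X ω - ((t - s) / (T - s)) • y
    with hZ
  have hZm : Measurable Z := (hYm.sub (hXm'.const_smul ((T - t) / (T - s)))).sub_const _
  have hlaw : ∀ A, MeasurableSet[F s] A → (P.restrict A).map Z = P A • γ := fun A hA =>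
    law_Z P ν F B hB T hT x y s t hs hst htT Z hZ hZm A hA
  -- the affine evaluation map
  set Φ : (Fin ν → ℝ) × (Fin ν → ℝ) → ℝ := fun q =>
    f (((T - t) / (T - s)) • q.1 + ((t - s) / (T - s)) • y + q.2) with hΦ
  have hΦm : Measurable Φ := hfm.comp (by fun_prop)
  have hYZ : ∀ ω, f (Y ω) = Φ (X ω, Z ω) := by
    intro ω
    simp only [hΦ, hZ]
    congr 1
    abel
  set G : (Fin ν → ℝ) → ℝ := fun z => ∫ w, Φ (z, w) ∂γ with hG
  have hGm : StronglyMeasurable G := hΦm.stronglyMeasurable.integral_prod_right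
  have hrhs : (fun ω => ∫ a : Fin ν → ℝ, heatKernel ν (t - s) (X ω) a *
      heatKernel ν (T - t) a y / heatKernel ν (T - s) (X ω) y * f a) = fun ω => G (X ω) := by
    ext ω
    exact (integral_shift ν T s t hst htT (X ω) y f hfm).symm
  have hGb : ∀ z, ‖G z‖ ≤ C := by
    intro z
    refine (norm_integral_le_of_norm_le_const (μ := γ) (ae_of_all _ fun w => hC _)).trans ?_
    simp
  have hintG : Integrable (fun ω => G (X ω)) P :=
    Integrable.of_bound (hGm.measurable.comp hXm').aestronglyMeasurable C
      (ae_of_all _ fun ω => hGb _)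
  have hintf : Integrable (fun ω => f (Y ω)) P :=
    Integrable.of_bound (hfm.comp hYm).aestronglyMeasurable C (ae_of_all _ fun ω => hC _)
  change P[fun ω => f (Y ω)|F s] =ᵐ[P] (fun ω => ∫ a : Fin ν → ℝ, heatKernel ν (t - s) (X ω) a *
      heatKernel ν (T - t) a y / heatKernel ν (T - s) (X ω) y * f a)
  rw [hrhs]
  symm
  refine ae_eq_condExp_of_forall_setIntegral_eq (F.le s) hintf
    (fun A _ _ => hintG.integrableOn) ?_ ?_
  · intro A hA _
    have hAm := F.le s A hA
    have hprod : (P.restrict A).map (fun ω => (X ω, Z ω)) = ((P.restrict A).map X).prod γ := by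
      symm
      refine Measure.prod_eq fun U V hU hV => ?_
      rw [Measure.map_apply (hXm'.prodMk hZm) (hU.prod hV), Measure.map_apply hXm' hU,
        Measure.restrict_apply ((hXm'.prodMk hZm) (hU.prod hV)), Measure.restrict_apply (hXm' hU)]
      have h := congrArg (fun μ => μ V) (hlaw (X ⁻¹' U ∩ A) ((hXm hU).inter hA))
      simp only [Measure.map_apply hZm hV, Measure.restrict_apply (hZm hV), Measure.smul_apply,
        smul_eq_mul] at h
      rw [← h]
      congr 1
      ext ω
      simp only [Set.mem_inter_iff, Set.mem_preimage, Set.mem_prod]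
      tauto
    have e1 : ∫ ω in A, f (Y ω) ∂P = ∫ q, Φ q ∂((P.restrict A).map X).prod γ := by
      rw [← hprod, integral_map (hXm'.prodMk hZm).aemeasurable hΦm.aestronglyMeasurable]
      simp only [hYZ]
    have : IsFiniteMeasure ((P.restrict A).map X) := inferInstance
    rw [e1, integral_prod _ (Integrable.of_bound hΦm.aestronglyMeasurable C
      (ae_of_all _ fun q => hC _)), integral_map hXm'.aemeasurable hGm.aestronglyMeasurable]
  · exact (hGm.measurable.comp hXm).stronglyMeasurable.aestronglyMeasurable
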